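/- For integers k > ℓ ≥ 1 and positive integers e_1,...,e_t, with i = i(k,ℓ), the ordered Ramsey number satisfies OR(P_{e_1}^{k,ℓ},...,P_{e_t}^{k,ℓ}) = (k−ℓ)·|Q_{i}(e_1,...,e_t)| + ℓ − (k−ℓ)(i−2). -/

import Mathlib

/-- An ordered hypergraph with vertex set `{1, …, n}` (with its natural order)
and edges given as finite sets of vertices. -/
structure OrderedHypergraph where
  n : ℕ
  edges : Finset (Finset ℕ)

/-- An ordered hypergraph `G` is contained in an ordered hypergraph `H` if there is an
injective, order-preserving map from the vertices of `G` to the vertices of `H` such that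
edges of `G` map to edges of `H`. -/
def OrderedHypergraph.Contains (H G : OrderedHypergraph) : Prop :=
  ∃ f : ℕ → ℕ, StrictMono f ∧ (∀ v ∈ Finset.Icc 1 G.n, f v ∈ Finset.Icc 1 H.n) ∧
    ∀ A ∈ G.edges, A.image f ∈ H.edges

/-- The complete `k`-uniform ordered hypergraph `K_N^k` on the vertex set `{1, …, N}`. -/
def completeHG (k N : ℕ) : OrderedHypergraph :=
  ⟨N, Finset.powersetCard k (Finset.Icc 1 N)⟩

/-- The `i`-colored subgraph of `K_N^k` under the coloring `c`. -/
def coloredSubgraph (k N : ℕ) {t : ℕ} (c : Finset ℕ → Fin t) (i : Fin t) : OrderedHypergraph :=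
  ⟨N, (Finset.powersetCard k (Finset.Icc 1 N)).filter fun A => c A = i⟩

/-- The ordered Ramsey number `OR(G 0, …, G (t-1))` of `k`-uniform ordered hypergraphs:
the minimum `N` such that every `t`-coloring of the edges of `K_N^k` contains, for some
color `i`, a copy of `G i` in the `i`-colored subgraph. -/
noncomputable def ORnum (k : ℕ) {t : ℕ} (G : Fin t → OrderedHypergraph) : ℕ :=
  sInf {N | ∀ c : Finset ℕ → Fin t, ∃ i, (coloredSubgraph k N c i).Contains (G i)}

/-- The `(k,ℓ)`-path `P_e^{k,ℓ}` with `e` edges: the ordered `k`-uniform hypergraph on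
vertex set `{1, …, e(k-ℓ)+ℓ}` with edges `A_r = {(r-1)(k-ℓ)+1, …, (r-1)(k-ℓ)+k}`. -/
def loosePath (k l e : ℕ) : OrderedHypergraph :=
  ⟨e * (k - l) + l,
    (Finset.range e).image fun r => Finset.Icc (r * (k - l) + 1) (r * (k - l) + k)⟩


/-- The posets `Q_m(e_1, …, e_t)` (bundled with their partial orders), indexed so that
`QPoset t e m` is `Q_{m+1}(e_1, …, e_t)`:  `Q_1` is the disjoint union of `t` chains of
sizes `e_1 - 1, …, e_t - 1` (elements of distinct chains incomparable, which is exactly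
the componentwise order on the sigma type), and `Q_{m+1} = J(Q_m)` is the poset of
down-sets (lower sets) of `Q_m`, ordered by inclusion. -/
def QPoset (t : ℕ) (e : Fin t → ℕ) : ℕ → (α : Type) × PartialOrder α
  | 0 => ⟨(j : Fin t) × Fin (e j - 1), inferInstance⟩
  | m + 1 =>
      letI := (QPoset t e m).2
      ⟨LowerSet (QPoset t e m).1, inferInstance⟩

/-!
Label the vertices of a digraph by a poset `P` so that the label at the head of an arc is never `≤`
the label at its tail. Such a labelling by `J(P)` exists if and only if the line digraph has one by
`P`. The shift digraph on increasing `(m + 1)`-tuples in `{1, …, N}` is the `m`-fold iterated line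
digraph of the transitive tournament on `{1, …, N}`, which has a labelling by a finite poset `P` if
and only if `N ≤ |P|`.
On the other hand, a labelling by `Q_1(e_1, …, e_t)` amounts to a `t`-coloring of the vertices in
which no walk along `e_j - 1` arcs has only vertices of color `j`. Hence the tuples have such a
coloring if and only if `N ≤ |J^m(Q_1)| = |Q_{m+1}|`.

To pass to `(k, ℓ)`-paths, let `d = k - ℓ` and write `k - 1 = m * d + a` with `a < d`; then
`m + 1` is the intersection number. Cutting the vertices into blocks of length `d`, an increasing
`(m + 1)`-tuple of blocks gives an edge, filling all the blocks but the last one, of which only the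
first `a + 1` vertices are taken; conversely, an edge is sent to the blocks containing every `d`-th
of its vertices. Both maps take consecutive edges of a path to arcs of the shift digraph and back.
-/

section Labelling

open scoped SetRel

variable {V P ι : Type*}

/-- A digraph `r` has a labelling by `P` if its vertices can be labelled so that the label at the
head of an arc is never `≤` the label at its tail. -/
def HasLabelling (r : SetRel V V) (P : Type*) [LE P] : Prop :=
  ∃ φ : V → P, ∀ ⦃x y⦄, x ~[r] y → ¬ φ y ≤ φ x

theorem HasLabelling.comap {W : Type*} [LE P] {r : SetRel V V} {s : SetRel W W}
    (h : HasLabelling s P) (f : V → W) (hf : ∀ ⦃x y⦄, x ~[r] y → f x ~[s] f y) :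
    HasLabelling r P := by
  obtain ⟨φ, hφ⟩ := h
  exact ⟨φ ∘ f, fun _ _ hxy => hφ (hf hxy)⟩

/-- The line digraph: its vertices are the arcs of `r`, and there is an arc from `(u, v)` to
`(v, w)`. -/
def lineDigraph (r : SetRel V V) : SetRel r r :=
  {p | p.1.1.2 = p.2.1.1}

/-- A labelling `ψ` by lower sets yields labels `φ (u, v) ∈ ψ v \ ψ u` on arcs; conversely, `ψ v`
is taken to be the lower set generated by the labels of the arcs into `v`. -/
theorem hasLabelling_lineDigraph_iff [Preorder P] {r : SetRel V V} :
    HasLabelling (lineDigraph r) P ↔ HasLabelling r (LowerSet P) := by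
  constructor
  · rintro ⟨φ, hφ⟩
    refine ⟨fun v => lowerClosure {p | ∃ a : r, a.1.2 = v ∧ φ a = p}, fun x y hxy hle => ?_⟩
    obtain ⟨_, ⟨a, hax, rfl⟩, hle⟩ := hle (subset_lowerClosure ⟨⟨(x, y), hxy⟩, rfl, rfl⟩)
    exact hφ (x := a) (y := ⟨(x, y), hxy⟩) hax hle
  · rintro ⟨ψ, hψ⟩
    choose φ hmem hnotMem using fun a : r => Set.not_subset.1 (hψ a.2)
    refine ⟨φ, fun a b hab hle => hnotMem b ?_⟩
    rw [← show a.1.2 = b.1.1 from hab]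
    exact (ψ _).lower hle (hmem a)

theorem hasLabelling_lt_fin_iff [PartialOrder P] [Finite P] {N : ℕ} :
    HasLabelling {p : Fin N × Fin N | p.1 < p.2} P ↔ N ≤ Nat.card P := by
  constructor
  · rintro ⟨φ, hφ⟩
    have hinj : Function.Injective φ := Function.Injective.of_lt_imp_ne fun _ _ hab h => hφ hab h.ge
    simpa using Nat.card_le_card_of_injective φ hinj
  · intro hN
    have : Fintype (LinearExtension P) := @Fintype.ofFinite _ ‹Finite P›
    have hcard : N ≤ (Finset.univ : Finset (LinearExtension P)).card := by
      rwa [Finset.card_univ, ← Nat.card_eq_fintype_card]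
    let g : Fin N ↪o LinearExtension P := Finset.univ.orderEmbOfCardLe hcard
    refine ⟨g, fun a b hab hle => ?_⟩
    have hle' : g b ≤ g a := (toLinearExtension (α := P)).monotone hle
    exact (g.lt_iff_lt.2 hab).not_ge hle'

/-- The digraph `r` has a walk along `n` arcs all of whose vertices get color `j` under `C`. -/
def HasMonoWalk (r : SetRel V V) (C : V → ι) (j : ι) (n : ℕ) : Prop :=
  ∃ w : RelSeries r, w.length = n ∧ ∀ x ∈ w, C x = j

theorem sigma_fin_le_iff {b : ι → ℕ} {p q : (j : ι) × Fin (b j)} (h : p.1 = q.1) :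
    p ≤ q ↔ p.2.val ≤ q.2.val := by
  obtain ⟨j, x⟩ := p
  obtain ⟨j', y⟩ := q
  obtain rfl : j = j' := h
  simp [Sigma.mk_le_mk_iff]

theorem length_lt_of_sigma_labelling {r : SetRel V V} {b : ι → ℕ} {φ : V → (j : ι) × Fin (b j)}
    (hφ : ∀ ⦃x y⦄, x ~[r] y → ¬ φ y ≤ φ x) {j : ι} (w : RelSeries r)
    (hw : ∀ x ∈ w, (φ x).1 = j) : w.length < b j := by
  have hcolor : ∀ p, (φ (w p)).1 = j := fun p => hw _ ⟨p, rfl⟩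
  let levels : LTSeries (Fin (b j)) :=
    { length := w.length
      toFun := fun p => (φ (w p)).2.cast (congrArg b (hcolor p))
      step := fun p => by
        have h := hφ (w.step p)
        rw [sigma_fin_le_iff ((hcolor _).trans (hcolor _).symm)] at h
        exact not_le.1 h }
  simpa using levels.length_lt_card

/-- A vertex is labelled by its color together with the length of a longest monochromatic walk
ending there. -/
theorem hasLabelling_sigma_of_forall_not_hasMonoWalk {r : SetRel V V} {C : V → ι} {b : ι → ℕ}
    (hC : ∀ j, ¬ HasMonoWalk r C j (b j)) : HasLabelling r ((j : ι) × Fin (b j)) := by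
  classical
  let EndsAt (x : V) (n : ℕ) : Prop :=
    ∃ w : RelSeries r, w.last = x ∧ w.length = n ∧ ∀ y ∈ w, C y = C x
  let level (x : V) : ℕ := Nat.findGreatest (EndsAt x) (b (C x))
  have hlevel (x : V) : EndsAt x (level x) := by
    refine Nat.findGreatest_spec (Nat.zero_le _) ⟨RelSeries.singleton r x, rfl, rfl, ?_⟩
    rintro y ⟨_, rfl⟩
    rfl
  have hlt (x : V) : level x < b (C x) := by
    refine (Nat.findGreatest_le _).lt_of_ne fun h => ?_
    obtain ⟨w, -, hlen, hw⟩ := hlevel x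
    exact hC (C x) ⟨w, hlen.trans h, hw⟩
  have hextend {x y : V} (hxy : x ~[r] y) (hcolor : C y = C x) : level x < level y := by
    obtain ⟨w, rfl, hlen, hw⟩ := hlevel x
    refine Nat.le_findGreatest (hcolor ▸ hlt _)
      ⟨w.snoc y hxy, w.last_snoc y hxy, by simpa using hlen, fun z hz => ?_⟩
    rcases RelSeries.mem_snoc.1 hz with hz | rfl
    · exact (hw z hz).trans hcolor.symm
    · rfl
  refine ⟨fun x => ⟨C x, level x, hlt x⟩, fun x y hxy hle => ?_⟩
  have hcolor : C y = C x := (Sigma.le_def.1 hle).1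
  exact (hextend hxy hcolor).not_ge ((sigma_fin_le_iff hcolor).1 hle)

theorem hasLabelling_sigma_iff {r : SetRel V V} {b : ι → ℕ} :
    HasLabelling r ((j : ι) × Fin (b j)) ↔ ∃ C : V → ι, ∀ j, ¬ HasMonoWalk r C j (b j) := by
  constructor
  · rintro ⟨φ, hφ⟩
    refine ⟨fun x => (φ x).1, ?_⟩
    rintro j ⟨w, hlen, hw⟩
    exact (length_lt_of_sigma_labelling hφ w hw).ne hlen
  · rintro ⟨C, hC⟩
    exact hasLabelling_sigma_of_forall_not_hasMonoWalk hC

end Labelling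

section Shift

open scoped SetRel

variable {α : Type*} [Preorder α] {P : Type*} {m : ℕ}

/-- The shift digraph on increasing `(m + 1)`-tuples: there is an arc from `(a₀, …, aₘ)` to
`(a₁, …, aₘ₊₁)` whenever `a₀ < a₁ < … < aₘ₊₁`. For `m = 0` only the condition `a₀ < a₁` remains. -/
def shiftDigraph (α : Type*) [Preorder α] (m : ℕ) :
    SetRel (Fin (m + 1) ↪o α) (Fin (m + 1) ↪o α) :=
  {p | p.1 0 < p.2 0 ∧ ∀ q : Fin m, p.1 q.succ = p.2 q.castSucc}

theorem hasLabelling_shiftDigraph_succ_iff_lineDigraph [LE P] :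
    HasLabelling (shiftDigraph α (m + 1)) P ↔ HasLabelling (lineDigraph (shiftDigraph α m)) P := by
  constructor <;> intro h
  · refine h.comap (fun a => OrderEmbedding.ofStrictMono (Matrix.vecCons (a.1.1 0) a.1.2)
      (strictMono_vecCons.2 ⟨a.2.1, a.1.2.strictMono⟩)) ?_
    rintro ⟨⟨x, y⟩, hxy⟩ ⟨⟨y', z⟩, hyz⟩ h
    obtain rfl : y = y' := h
    exact ⟨hxy.1, Fin.cases rfl hyz.2⟩
  · refine h.comap (fun x => ⟨(Fin.castSuccOrderEmb.trans x, (Fin.succOrderEmb _).trans x),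
      x.strictMono (Fin.castSucc_lt_succ), fun _ => rfl⟩) ?_
    intro x y hxy
    exact RelEmbedding.ext hxy.2

theorem hasLabelling_shiftDigraph_succ_iff [Preorder P] :
    HasLabelling (shiftDigraph α (m + 1)) P ↔ HasLabelling (shiftDigraph α m) (LowerSet P) :=
  hasLabelling_shiftDigraph_succ_iff_lineDigraph.trans hasLabelling_lineDigraph_iff

theorem hasLabelling_shiftDigraph_zero_iff [PartialOrder P] [Finite P] {N : ℕ} :
    HasLabelling (shiftDigraph (Fin N) 0) P ↔ N ≤ Nat.card P := by
  rw [← hasLabelling_lt_fin_iff]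
  constructor <;> intro h
  · refine h.comap (fun a => OrderEmbedding.ofStrictMono (fun _ => a)
      (Subsingleton.strictMono (α := Fin 1) _)) ?_
    exact fun _ _ hab => ⟨hab, fun q => q.elim0⟩
  · exact h.comap (fun x => x 0) fun _ _ hxy => hxy.1

instance (t : ℕ) (e : Fin t → ℕ) (m : ℕ) : PartialOrder (QPoset t e m).1 :=
  (QPoset t e m).2

instance (t : ℕ) (e : Fin t → ℕ) (m : ℕ) : Finite (QPoset t e m).1 := by
  induction m with
  | zero => exact inferInstanceAs (Finite ((j : Fin t) × Fin (e j - 1)))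
  | succ m ih =>
    have := Finite.of_injective (SetLike.coe (A := LowerSet (QPoset t e m).1)) SetLike.coe_injective
    exact inferInstanceAs (Finite (LowerSet (QPoset t e m).1))

theorem hasLabelling_shiftDigraph_QPoset_iff {N t : ℕ} {e : Fin t → ℕ} (n : ℕ) :
    HasLabelling (shiftDigraph (Fin N) m) (QPoset t e n).1 ↔
      N ≤ Nat.card (QPoset t e (n + m)).1 := by
  induction m generalizing n with
  | zero => exact hasLabelling_shiftDigraph_zero_iff
  | succ m ih =>
    rw [hasLabelling_shiftDigraph_succ_iff, ← add_assoc, add_right_comm]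
    exact ih (n + 1)

theorem exists_coloring_forall_not_hasMonoWalk_iff {N t : ℕ} {e : Fin t → ℕ} :
    (∃ C : (Fin (m + 1) ↪o Fin N) → Fin t,
      ∀ j, ¬ HasMonoWalk (shiftDigraph (Fin N) m) C j (e j - 1)) ↔
      N ≤ Nat.card (QPoset t e m).1 := by
  rw [← hasLabelling_sigma_iff, ← m.zero_add, ← hasLabelling_shiftDigraph_QPoset_iff, m.zero_add]
  rfl

end Shift

section Windows

open scoped SetRel

variable {N m : ℕ}

theorem exists_strictMono_extending (x : Fin (m + 1) ↪o Fin N) :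
    ∃ g : ℕ → ℕ, StrictMono g ∧ ∀ q : Fin (m + 1), g q = x q := by
  refine ⟨fun u => if h : u < m + 1 then x ⟨u, h⟩ else N + u, fun u v huv => ?_, fun q => ?_⟩
  · dsimp only
    split_ifs with hu hv hv
    · exact x.strictMono huv
    · exact (x _).isLt.trans_le (Nat.le_add_right N v)
    · omega
    · omega
  · exact dif_pos q.isLt

theorem exists_strictMono_of_shiftDigraph_walk {n : ℕ} (w : Fin (n + 1) → Fin (m + 1) ↪o Fin N)
    (hw : ∀ p : Fin n, w p.castSucc ~[shiftDigraph (Fin N) m] w p.succ) :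
    ∃ g : ℕ → ℕ, StrictMono g ∧ ∀ (p : Fin (n + 1)) (q : Fin (m + 1)), g (p + q) = w p q := by
  induction n with
  | zero =>
    obtain ⟨g, hg, hgx⟩ := exists_strictMono_extending (w 0)
    exact ⟨g, hg, fun p q => by simpa [Fin.fin_one_eq_zero p] using hgx q⟩
  | succ n ih =>
    obtain ⟨g, hg, hgw⟩ := ih (Fin.tail w) fun p => hw p.succ
    have hfirst : (w 0 0 : ℕ) < g 0 :=
      lt_of_lt_of_eq (b := (w 1 0 : ℕ)) (hw 0).1 (hgw 0 0).symm
    refine ⟨fun | 0 => w 0 0 | u + 1 => g u, strictMono_nat_of_lt_succ ?_, ?_⟩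
    · rintro (_ | u)
      · exact hfirst
      · exact hg u.lt_succ_self
    · intro p q
      cases p using Fin.cases with
      | zero =>
        cases q using Fin.cases with
        | zero => rfl
        | succ q =>
          have hq : w 0 q.succ = w 1 q.castSucc := (hw 0).2 q
          simpa [hq, Fin.tail] using hgw 0 q.castSucc
      | succ p =>
        have hindex : (p.succ : ℕ) + q = p + q + 1 := Nat.succ_add p q
        simpa only [hindex, Fin.tail] using hgw p q

/-- The walk in the shift digraph whose vertices are the windows `(g p, …, g (p + m))`, `p ≤ n`. -/
def windowWalk {g : ℕ → ℕ} (hg : StrictMono g) {n : ℕ} (hN : g (n + m) < N) :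
    RelSeries (shiftDigraph (Fin N) m) where
  length := n
  toFun p := OrderEmbedding.ofStrictMono
    (fun q => ⟨g (p + q), (hg.monotone (by omega)).trans_lt hN⟩)
    fun _ _ hq => hg (Nat.add_lt_add_left hq p)
  step p := ⟨hg (by simp), fun q => Fin.ext (congrArg g (by simp; omega))⟩

end Windows

section Edges

/-- The `k`-set of vertices `G 0 + 1, …, G (k - 1) + 1`. Vertices are numbered from `1`, while all
index computations are done from `0`. -/
def edgeOf (k : ℕ) (G : ℕ → ℕ) : Finset ℕ :=
  (Finset.range k).image fun u => G u + 1

theorem edgeOf_congr {k : ℕ} {G H : ℕ → ℕ} (h : ∀ u < k, G u = H u) : edgeOf k G = edgeOf k H :=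
  Finset.image_congr fun u hu => congrArg (· + 1) (h u (Finset.mem_range.1 hu))

theorem nth_mem_edgeOf {k u : ℕ} {G : ℕ → ℕ} (hG : StrictMono G) (hu : u < k) :
    Nat.nth (· ∈ edgeOf k G) u = G u + 1 := by
  have hcount : Nat.count (· ∈ edgeOf k G) (G u + 1) = u := by
    have hfilter : {v ∈ Finset.range (G u + 1) | v ∈ edgeOf k G} = edgeOf u G := by
      ext v
      simp only [edgeOf, Finset.mem_filter, Finset.mem_range, Finset.mem_image]
      constructor
      · rintro ⟨hv, u', -, rfl⟩
        exact ⟨u', hG.lt_iff_lt.1 (Nat.lt_of_succ_lt_succ hv), rfl⟩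
      · rintro ⟨u', hu', rfl⟩
        exact ⟨Nat.succ_lt_succ (hG hu'), u', hu'.trans hu, rfl⟩
    have hinj : Function.Injective fun u => G u + 1 := fun _ _ h => hG.injective (by simpa using h)
    rw [Nat.count_eq_card_filter_range, hfilter, edgeOf, Finset.card_image_of_injective _ hinj,
      Finset.card_range]
  have hmem : G u + 1 ∈ edgeOf k G := Finset.mem_image_of_mem _ (Finset.mem_range.2 hu)
  simpa only [hcount] using Nat.nth_count (p := (· ∈ edgeOf k G)) hmem

theorem image_Icc_eq_edgeOf {f F : ℕ → ℕ} (hf : ∀ u, f (u + 1) = F u + 1) (a k : ℕ) :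
    (Finset.Icc (a + 1) (a + k)).image f = edgeOf k fun u => F (a + u) := by
  ext v
  simp only [edgeOf, Finset.mem_image, Finset.mem_Icc, Finset.mem_range, ← hf]
  constructor
  · rintro ⟨u, hu, rfl⟩
    exact ⟨u - (a + 1), by omega, congrArg f (by omega)⟩
  · rintro ⟨u, hu, rfl⟩
    exact ⟨a + u + 1, by omega, rfl⟩

variable {l d N n t : ℕ} {c : Finset ℕ → Fin t} {j : Fin t}

theorem contains_loosePath_iff_exists_image (hd : 0 < d) :
    (coloredSubgraph (l + d) N c j).Contains (loosePath (l + d) l (n + 1)) ↔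
      ∃ f : ℕ → ℕ, StrictMono f ∧ f (n * d + (l + d)) ≤ N ∧
        ∀ r ≤ n, c ((Finset.Icc (r * d + 1) (r * d + (l + d))).image f) = j := by
  have hlast : (n + 1) * d + l = n * d + (l + d) := by ring
  simp only [OrderedHypergraph.Contains, coloredSubgraph, loosePath, Nat.add_sub_cancel_left, hlast]
  refine exists_congr fun f => and_congr_right fun hf => ⟨fun ⟨hv, he⟩ => ⟨?_, ?_⟩,
    fun ⟨hN, hc⟩ => ⟨?_, ?_⟩⟩
  · exact (Finset.mem_Icc.1 (hv _ (Finset.mem_Icc.2 ⟨by omega, le_rfl⟩))).2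
  · intro r hr
    have hedge := he _ (Finset.mem_image_of_mem _ (Finset.mem_range.2 (Nat.lt_succ_of_le hr)))
    exact (Finset.mem_filter.1 hedge).2
  · intro v hv
    rw [Finset.mem_Icc] at hv ⊢
    exact ⟨hv.1.trans hf.le_apply, (hf.monotone hv.2).trans hN⟩
  · rw [Finset.forall_mem_image]
    intro r hr
    have hrn : r ≤ n := Nat.le_of_lt_succ (Finset.mem_range.1 hr)
    refine Finset.mem_filter.2 ⟨Finset.mem_powersetCard.2 ⟨?_, ?_⟩, hc r hrn⟩
    · rw [Finset.image_subset_iff]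
      intro v hv
      rw [Finset.mem_Icc] at hv ⊢
      have hvn : v ≤ n * d + (l + d) := hv.2.trans (by gcongr)
      exact ⟨(Nat.le_add_left 1 _).trans (hv.1.trans hf.le_apply), (hf.monotone hvn).trans hN⟩
    · rw [Finset.card_image_of_injective _ hf.injective, Nat.card_Icc]
      omega

theorem contains_loosePath_iff (hd : 0 < d) :
    (coloredSubgraph (l + d) N c j).Contains (loosePath (l + d) l (n + 1)) ↔
      ∃ F : ℕ → ℕ, StrictMono F ∧ F (n * d + (l + d) - 1) < N ∧
        ∀ r ≤ n, c (edgeOf (l + d) fun u => F (r * d + u)) = j := by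
  have hlast : n * d + (l + d) = n * d + (l + d) - 1 + 1 := by omega
  rw [contains_loosePath_iff_exists_image hd]
  constructor
  · rintro ⟨f, hf, hN, hc⟩
    have hshift (u : ℕ) : f (u + 1) = f (u + 1) - 1 + 1 :=
      (Nat.succ_pred_eq_of_pos (u.succ_pos.trans_le hf.le_apply)).symm
    refine ⟨fun u => f (u + 1) - 1, fun u v huv => ?_, ?_, fun r hr => ?_⟩
    · have hlt : f (u + 1) < f (v + 1) := hf (Nat.succ_lt_succ huv)
      rw [hshift u, hshift v] at hlt
      exact Nat.lt_of_succ_lt_succ hlt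
    · rwa [hlast, hshift, Nat.succ_le_iff] at hN
    · rw [← image_Icc_eq_edgeOf hshift]
      exact hc r hr
  · rintro ⟨F, hF, hN, hc⟩
    refine ⟨fun | 0 => 0 | u + 1 => F u + 1, strictMono_nat_of_lt_succ ?_, ?_, fun r hr => ?_⟩
    · rintro (_ | u)
      · exact Nat.succ_pos _
      · exact Nat.succ_lt_succ (hF u.lt_succ_self)
    · rw [hlast]
      exact hN
    · rw [image_Icc_eq_edgeOf (F := F) fun _ => rfl]
      exact hc r hr

end Edges

section Blocks

variable {d a m : ℕ}

/-- The increasing sequence running through the blocks `{b * d, …, b * d + d - 1}` with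
`b = g 0, g 1, …`. -/
def blowUp (d : ℕ) (g : ℕ → ℕ) (u : ℕ) : ℕ :=
  g (u / d) * d + u % d

/-- The sequence of block numbers of the terms `F a, F (d + a), F (2 * d + a), …`, where block `b`
is now `{b * d + a, …, b * d + a + d - 1}`. -/
def sample (d a : ℕ) (F : ℕ → ℕ) (p : ℕ) : ℕ :=
  (F (p * d + a) - a) / d

theorem blowUp_mul_add (g : ℕ → ℕ) (r : ℕ) {u : ℕ} (hd : 0 < d) :
    blowUp d g (r * d + u) = blowUp d (fun q => g (r + q)) u := by
  simp [blowUp, Nat.add_comm (r * d), Nat.add_mul_div_right _ _ hd, Nat.add_comm r]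

theorem blowUp_mul_add_of_lt (g : ℕ → ℕ) (r : ℕ) (ha : a < d) :
    blowUp d g (r * d + a) = g r * d + a := by
  rw [blowUp_mul_add _ _ (Nat.zero_lt_of_lt ha), blowUp, Nat.div_eq_of_lt ha, Nat.mod_eq_of_lt ha,
    add_zero]

theorem strictMono_blowUp {g : ℕ → ℕ} (hg : StrictMono g) (hd : 0 < d) :
    StrictMono (blowUp d g) := by
  intro u v huv
  rcases (Nat.div_le_div_right (c := d) huv.le).lt_or_eq with hlt | heq
  · calc blowUp d g u < (g (u / d) + 1) * d := by
          rw [add_one_mul]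
          exact Nat.add_lt_add_left (Nat.mod_lt u hd) _
      _ ≤ g (v / d) * d := Nat.mul_le_mul_right d (hg hlt)
      _ ≤ blowUp d g v := Nat.le_add_right _ _
  · have hmod : u % d < v % d := by
      have hu := Nat.div_add_mod u d
      have hv := Nat.div_add_mod v d
      rw [heq] at hu
      omega
    simpa [blowUp, heq] using hmod

theorem sample_mul_add (F : ℕ → ℕ) (r p : ℕ) :
    sample d a (fun u => F (r * d + u)) p = sample d a F (r + p) := by
  simp [sample, Nat.add_mul, Nat.add_assoc]

theorem strictMono_sample {F : ℕ → ℕ} (hF : StrictMono F) (hd : 0 < d) :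
    StrictMono (sample d a F) := by
  refine strictMono_nat_of_lt_succ fun p => ?_
  have hstep : F (p * d + a) + d ≤ F ((p + 1) * d + a) := by
    simpa [Nat.add_mul, Nat.add_comm, Nat.add_left_comm] using hF.add_le_nat d (p * d + a)
  have ha : a ≤ F (p * d + a) := (Nat.le_add_left a _).trans hF.le_apply
  calc sample d a F p < (F (p * d + a) - a + d) / d := by
        rw [Nat.add_div_right _ hd]
        exact Nat.lt_succ_self _
    _ ≤ sample d a F (p + 1) := Nat.div_le_div_right (by omega)

variable {ι : Type*}

theorem exists_coloring_comp_blowUp (c : Finset ℕ → ι) (N m : ℕ) (ha : a < d) :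
    ∃ C : (Fin (m + 1) ↪o Fin N) → ι, ∀ x (g : ℕ → ℕ), (∀ q : Fin (m + 1), g q = x q) →
      C x = c (edgeOf (m * d + a + 1) (blowUp d g)) := by
  refine ⟨fun x => c (edgeOf (m * d + a + 1) (blowUp d fun q => x (Fin.ofNat (m + 1) q))),
    fun x g hg => ?_⟩
  refine congrArg c (edgeOf_congr fun u hu => ?_)
  have hblock : u / d < m + 1 := by
    rw [Nat.div_lt_iff_lt_mul (Nat.zero_lt_of_lt ha), add_one_mul]
    omega
  simp [blowUp, ← hg, Nat.mod_eq_of_lt hblock]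

theorem exists_coloring_comp_sample [Nonempty ι] {N : ℕ} (C : (Fin (m + 1) ↪o Fin N) → ι)
    (d a : ℕ) :
    ∃ c : Finset ℕ → ι, ∀ x (F : ℕ → ℕ), StrictMono F → (∀ q : Fin (m + 1), sample d a F q = x q) →
      c (edgeOf (m * d + a + 1) F) = C x := by
  let values (x : Fin (m + 1) ↪o Fin N) (q : Fin (m + 1)) : ℕ := x q
  have hvalues : Function.Injective values := fun x y h =>
    RelEmbedding.ext fun q => Fin.ext (congrFun h q)
  let tuple (A : Finset ℕ) (q : Fin (m + 1)) : ℕ := sample d a (fun u => Nat.nth (· ∈ A) u - 1) q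
  refine ⟨fun A => Function.extend values C (fun _ => Classical.arbitrary ι) (tuple A),
    fun x F hF hx => ?_⟩
  have htuple : tuple (edgeOf (m * d + a + 1) F) = values x := by
    funext q
    have hq : q * d + a < m * d + a + 1 := by
      have := Nat.mul_le_mul_right d q.is_le
      omega
    simp only [tuple, values, ← hx, sample, nth_mem_edgeOf hF hq, Nat.add_sub_cancel]
  simp only [htuple, hvalues.extend_apply]

end Blocks

section Ramsey

variable {l d a m M t : ℕ}

theorem contains_loosePath_of_forall_hasMonoWalk (c : Finset ℕ → Fin t) {b : Fin t → ℕ}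
    (hk : l + d = m * d + a + 1) (ha : a < d)
    (hC : ∀ C : (Fin (m + 1) ↪o Fin (M + 1)) → Fin t,
      ∃ j, HasMonoWalk (shiftDigraph (Fin (M + 1)) m) C j (b j)) :
    ∃ j, (coloredSubgraph (l + d) (d * M + a + 1) c j).Contains
      (loosePath (l + d) l (b j + 1)) := by
  have hd : 0 < d := Nat.zero_lt_of_lt ha
  obtain ⟨C, hCc⟩ := exists_coloring_comp_blowUp c (M + 1) m ha
  obtain ⟨j, w, hlen, hw⟩ := hC C
  obtain ⟨g, hg, hgw⟩ := exists_strictMono_of_shiftDigraph_walk w.toFun w.step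
  refine ⟨j, (contains_loosePath_iff hd).2 ⟨blowUp d g, strictMono_blowUp hg hd, ?_, ?_⟩⟩
  · have hlast : b j * d + (l + d) - 1 = (b j + m) * d + a := by
      rw [hk, add_mul]
      omega
    have hgM : g (b j + m) ≤ M := by
      rw [← hlen]
      exact (hgw (Fin.last _) (Fin.last m)).trans_le (Fin.is_le _)
    rw [hlast, blowUp_mul_add_of_lt _ _ ha, mul_comm d M, Nat.lt_succ_iff]
    gcongr
  · intro r hr
    let p : Fin (w.length + 1) := ⟨r, by omega⟩
    simp only [blowUp_mul_add g r hd, hk]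
    rw [← hCc (w p) _ (hgw p)]
    exact hw _ ⟨p, rfl⟩

theorem exists_coloring_forall_not_contains_loosePath [Nonempty (Fin t)] {N : ℕ} {b : Fin t → ℕ}
    (hk : l + d = m * d + a + 1) (ha : a < d) (hN : N ≤ d * M + a)
    {C : (Fin (m + 1) ↪o Fin M) → Fin t}
    (hC : ∀ j, ¬ HasMonoWalk (shiftDigraph (Fin M) m) C j (b j)) :
    ∃ c : Finset ℕ → Fin t,
      ∀ j, ¬ (coloredSubgraph (l + d) N c j).Contains (loosePath (l + d) l (b j + 1)) := by
  have hd : 0 < d := Nat.zero_lt_of_lt ha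
  obtain ⟨c, hcC⟩ := exists_coloring_comp_sample C d a
  refine ⟨c, fun j hcontains => hC j ?_⟩
  obtain ⟨F, hF, hlt, hcolor⟩ := (contains_loosePath_iff hd).1 hcontains
  have hlast : b j * d + (l + d) - 1 = (b j + m) * d + a := by
    rw [hk, add_mul]
    omega
  have hM : sample d a F (b j + m) < M := by
    rw [hlast] at hlt
    have := (Nat.le_add_left a ((b j + m) * d)).trans hF.le_apply
    rw [sample, Nat.div_lt_iff_lt_mul hd, mul_comm M d]
    omega
  refine ⟨windowWalk (strictMono_sample hF hd) hM, rfl, ?_⟩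
  rintro _ ⟨p, rfl⟩
  simp only [hk] at hcolor
  refine ((hcC _ _ (hF.comp fun _ _ huv => Nat.add_lt_add_left huv _) fun q => ?_).symm).trans
    (hcolor p p.is_le)
  exact sample_mul_add F p q

theorem ORnum_eq_of_forall_contains_of_avoiding {k t N : ℕ} {G : Fin t → OrderedHypergraph}
    (hcontains : ∀ c : Finset ℕ → Fin t, ∃ j, (coloredSubgraph k N c j).Contains (G j))
    (havoid : ∀ N' < N, ∃ c : Finset ℕ → Fin t, ∀ j, ¬ (coloredSubgraph k N' c j).Contains (G j)) :
    ORnum k G = N := by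
  refine le_antisymm (Nat.sInf_le hcontains) (le_csInf ⟨N, hcontains⟩ fun N' hN' => ?_)
  by_contra! hlt
  obtain ⟨c, hc⟩ := havoid N' hlt
  obtain ⟨j, hj⟩ := hN' c
  exact hc j hj

theorem ORnum_loosePath_eq {e : Fin t → ℕ} (ht : 0 < t) (he : ∀ j, 1 ≤ e j)
    (hk : l + d = m * d + a + 1) (ha : a < d) :
    ORnum (l + d) (fun j => loosePath (l + d) l (e j)) =
      d * Nat.card (QPoset t e m).1 + a + 1 := by
  have : Nonempty (Fin t) := ⟨⟨0, ht⟩⟩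
  have he' (j : Fin t) : e j = e j - 1 + 1 := (Nat.sub_add_cancel (he j)).symm
  rw [funext fun j => congrArg (loosePath (l + d) l) (he' j)]
  refine ORnum_eq_of_forall_contains_of_avoiding (fun c => ?_) fun N hN => ?_
  · refine contains_loosePath_of_forall_hasMonoWalk c hk ha ?_
    by_contra! hC
    exact (exists_coloring_forall_not_hasMonoWalk_iff.1 hC).not_gt (Nat.lt_succ_self _)
  · obtain ⟨C, hC⟩ := exists_coloring_forall_not_hasMonoWalk_iff.2 le_rfl
    exact exists_coloring_forall_not_contains_loosePath hk ha (Nat.le_of_lt_succ hN) hC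

theorem exists_eq_mul_add_of_intersectionNumber {i : ℕ} (hi : 2 ≤ i)
    (hlower : (i - 2) * (l + d) < (i - 1) * l) (hupper : i * l ≤ (i - 1) * (l + d)) :
    ∃ a < d, l + d = (i - 1) * d + a + 1 := by
  obtain ⟨m, rfl⟩ := Nat.exists_eq_add_of_le' hi
  simp only [Nat.add_sub_cancel, show m + 2 - 1 = m + 1 by omega] at hlower hupper ⊢
  have hlower' : m * d < l := by linarith
  have hupper' : l ≤ m * d + d := by linarith
  exact ⟨l - m * d - 1, by omega, by rw [add_one_mul]; omega⟩

end Ramsey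

/-- For `k > ℓ ≥ 1`, positive integers `e_1, …, e_t`, and `i = i(k,ℓ)`
the intersection number (the unique `i ≥ 2` with `(i-2)/(i-1) < ℓ/k ≤ (i-1)/i`),
`OR(P_{e_1}^{k,ℓ}, …, P_{e_t}^{k,ℓ}) = (k-ℓ)·|Q_i(e_1,…,e_t)| + ℓ - (k-ℓ)(i-2)`.
(Here `Q_i = QPoset t e (i-1)`.) -/
theorem ordered_ramsey_loose_paths_poset (k l i t : ℕ) (e : Fin t → ℕ)
    (ht : 1 ≤ t) (hl : 1 ≤ l) (hlk : l < k) (he : ∀ j, 1 ≤ e j)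
    (hi2 : 2 ≤ i) (hi_lower : (i - 2) * k < (i - 1) * l) (hi_upper : i * l ≤ (i - 1) * k) :
    (ORnum k (fun j => loosePath k l (e j)) : ℤ) =
      ((k : ℤ) - l) * (Nat.card (QPoset t e (i - 1)).1 : ℤ)
        + l - ((k : ℤ) - l) * ((i : ℤ) - 2) := by
  obtain ⟨d, rfl⟩ := Nat.exists_eq_add_of_le hlk.le
  obtain ⟨a, ha, hk⟩ := exists_eq_mul_add_of_intersectionNumber hi2 hi_lower hi_upper
  rw [ORnum_loosePath_eq ht he hk ha]
  zify [one_le_two.trans hi2] at hk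
  push_cast
  linear_combination -hk
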